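/- Let I = I(G_{n,r}) be the edge ideal of G_{n,r} in R = k[x_1,...,x_n] and let m = (x_1,...,x_n) be the homogeneous maximal ideal. Then m^t · I^{(t)} ⊆ I^t for all t ≥ 1. -/

import Mathlib

open MvPolynomial

/-- The graph `G_{n,r}`: vertices `x_1,…,x_n` in cyclic order (indexed by `ZMod n`),
where for `i < j` the vertices `x_i, x_j` are adjacent iff `r+1 ≤ j-i ≤ n-(r+1)`. -/
def Gnr (n r : ℕ) : SimpleGraph (ZMod n) :=
  SimpleGraph.fromRel (fun i j => r + 1 ≤ j.val - i.val ∧ j.val - i.val ≤ n - (r + 1))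

/-- A vertex cover (as a finite set of vertices): meets every edge. -/
def IsVertexCover {V : Type*} (G : SimpleGraph V) (C : Finset V) : Prop :=
  ∀ ⦃a b : V⦄, G.Adj a b → a ∈ C ∨ b ∈ C

/-- A minimal vertex cover. -/
def IsMinVertexCover {V : Type*} (G : SimpleGraph V) (C : Finset V) : Prop :=
  IsVertexCover G C ∧ ∀ D ⊆ C, IsVertexCover G D → D = C

/-- The edge ideal `I(G) = (x_i x_j : {x_i,x_j} ∈ E(G))` of a graph. -/
noncomputable def edgeIdeal (k : Type*) [Field k] {V : Type*} (G : SimpleGraph V) :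
    Ideal (MvPolynomial V k) :=
  Ideal.span {p | ∃ i j : V, G.Adj i j ∧ p = X i * X j}

/-- The monomial prime ideal generated by the variables of a vertex set `C`. -/
noncomputable def coverPrime (k : Type*) [Field k] {V : Type*} (C : Finset V) :
    Ideal (MvPolynomial V k) :=
  Ideal.span ((fun i => (X i : MvPolynomial V k)) '' ↑C)

/-- The `t`-th symbolic power of the edge ideal of `G`: the intersection of the `t`-th
powers of the monomial primes corresponding to the minimal vertex covers of `G`. -/
noncomputable def symbPow (k : Type*) [Field k] {V : Type*} (G : SimpleGraph V) (t : ℕ) :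
    Ideal (MvPolynomial V k) :=
  ⨅ (C : Finset V) (_ : IsMinVertexCover G C), (coverPrime k C) ^ t

/-!
A monomial `x ^ d` lies in `I(G)^{(t)}` iff every vertex cover has `d`-weight at least `t`, that is,
iff every independent set has weight at most `deg d - t`. If `deg d > 2t`, Hajnal's lemma provides
a vertex of `d` common to all independent sets attaining this bound, so one copy of it can be
removed; hence `x ^ d` is divisible by a monomial of `I(G)^{(t)}` of degree exactly `2t`. List the
`2t` variables of that monomial in the cyclic order as `y_1 ≤ ⋯ ≤ y_{2t}`. Each of the two arcs
bounded by `y_j` and `y_{t+j}` contains `t + 1` of them, so neither arc is independent, which for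
`G_{n,r}` forces `y_j` and `y_{t+j}` to be adjacent. Thus the monomial is a product of `t` edges.
Finally, `I(G)^{(t)}` lives in degrees at least `t`, so `m^t I(G)^{(t)}` lives in degrees at
least `2t`.
-/

open Finset Finsupp

section Hajnal

variable {V : Type*} [DecidableEq V] {G : SimpleGraph V}

theorem isIndepSet_inter_union_sdiff {S U C : Finset V} (hS : G.IsIndepSet (S : Set V))
    (hCU : C ⊆ U) (hUC : ∀ u ∈ U, ∀ c ∈ C, ¬G.Adj u c) :
    G.IsIndepSet ((S ∩ U ∪ C \ S : Finset V) : Set V) := by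
  intro x hx y hy hxy
  simp only [coe_union, coe_inter, coe_sdiff, Set.mem_union, Set.mem_inter_iff, Set.mem_sdiff,
    mem_coe] at hx hy
  rcases hx with ⟨hxS, hxU⟩ | ⟨hxC, -⟩ <;> rcases hy with ⟨hyS, hyU⟩ | ⟨hyC, -⟩
  · exact hS hxS hyS hxy
  · exact hUC x hxU y hyC
  · exact fun h ↦ hUC y hyU x hxC h.symm
  · exact hUC x (hCU hxC) y hyC

theorem not_adj_of_mem_sup_of_mem_inf' {𝒜 : Finset (Finset V)} (h𝒜 : 𝒜.Nonempty)
    (hindep : ∀ A ∈ 𝒜, G.IsIndepSet (A : Set V)) {u c : V} (hu : u ∈ 𝒜.sup id)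
    (hc : c ∈ 𝒜.inf' h𝒜 id) : ¬G.Adj u c := by
  obtain ⟨A, hA, huA⟩ := Finset.mem_sup.1 hu
  intro hadj
  exact hindep A hA huA ((Finset.mem_inf' h𝒜).1 hc A hA) hadj.ne hadj

/-- Weighted form of Hajnal's lemma on collections of maximum independent sets. -/
theorem two_nsmul_le_sum_sup_add_sum_inf' {M : Type*} [AddCommMonoid M] [PartialOrder M]
    [IsOrderedCancelAddMonoid M] {w : V → M} {α : M}
    (hmax : ∀ A : Finset V, G.IsIndepSet (A : Set V) → ∑ v ∈ A, w v ≤ α)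
    {𝒜 : Finset (Finset V)} (h𝒜 : 𝒜.Nonempty) (hindep : ∀ A ∈ 𝒜, G.IsIndepSet (A : Set V))
    (hα : ∀ A ∈ 𝒜, ∑ v ∈ A, w v = α) :
    2 • α ≤ ∑ v ∈ 𝒜.sup id, w v + ∑ v ∈ 𝒜.inf' h𝒜 id, w v := by
  induction h𝒜 using Finset.Nonempty.cons_induction with
  | singleton S => simp [hα S, two_nsmul]
  | cons S 𝒜 hS h𝒜 ih =>
    rw [forall_mem_cons] at hindep hα
    specialize ih hindep.2 hα.2
    rw [sup_cons, inf'_cons h𝒜]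
    set U := 𝒜.sup id
    set C := 𝒜.inf' h𝒜 id
    have hCU : C ⊆ U := h𝒜.elim fun A hA ↦ (inf'_le id hA).trans (le_sup (f := id) hA)
    have hdisj : Disjoint (S ∩ U) (C \ S) := disjoint_sdiff.mono_left inter_subset_left
    have hexchange : ∑ v ∈ S ∩ U, w v + ∑ v ∈ C \ S, w v ≤ α := by
      rw [← sum_union hdisj]
      exact hmax _ (isIndepSet_inter_union_sdiff hindep.1 hCU fun u hu c hc ↦
        not_adj_of_mem_sup_of_mem_inf' h𝒜 hindep.2 hu hc)
    refine le_of_add_le_add_right (a := α) ?_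
    calc 2 • α + α ≤ ∑ v ∈ U, w v + ∑ v ∈ C, w v + ∑ v ∈ S, w v := by
          rw [hα.1]; gcongr
      _ = (∑ v ∈ S ∪ U, w v + ∑ v ∈ S ∩ U, w v) + (∑ v ∈ S ∩ C, w v + ∑ v ∈ C \ S, w v) := by
          rw [sum_union_inter, inter_comm S C, sum_inter_add_sum_sdiff]
          abel
      _ = ∑ v ∈ S ∪ U, w v + ∑ v ∈ S ∩ C, w v + (∑ v ∈ S ∩ U, w v + ∑ v ∈ C \ S, w v) := by abel
      _ ≤ ∑ v ∈ S ∪ U, w v + ∑ v ∈ S ∩ C, w v + α := by gcongr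

end Hajnal

section SymbExponent

variable {V : Type*} {G : SimpleGraph V} {t : ℕ} {b d : V →₀ ℕ}

theorem sum_le_degree (d : V →₀ ℕ) (A : Finset V) : ∑ v ∈ A, d v ≤ d.degree :=
  sum_le_sum_of_ne_zero fun _ _ hv ↦ mem_support_iff.2 hv

/-- The exponents of the monomials of `I(G)^{(t)}`: every vertex cover of `G` has `d`-weight at
least `t`, expressed through the complementary independent sets. -/
def IsSymbExponent (G : SimpleGraph V) (t : ℕ) (d : V →₀ ℕ) : Prop :=
  ∀ A : Finset V, G.IsIndepSet (A : Set V) → t + ∑ v ∈ A, d v ≤ d.degree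

namespace IsSymbExponent

theorem le_degree (hd : IsSymbExponent G t d) : t ≤ d.degree := by
  simpa using hd ∅ (by simp)

theorem mono (hb : IsSymbExponent G t b) (hbd : b ≤ d) : IsSymbExponent G t d := by
  obtain ⟨c, rfl⟩ := exists_add_of_le hbd
  intro A hA
  simp only [Finsupp.add_apply, sum_add_distrib, map_add]
  have := hb A hA
  have := sum_le_degree c A
  lia

theorem of_add_single {v : V} (hb : IsSymbExponent G t (b + single v 1))
    (hv : ∀ A : Finset V, G.IsIndepSet (A : Set V) →
      t + ∑ u ∈ A, (b + single v 1 : V →₀ ℕ) u = (b + single v 1).degree → v ∈ A) :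
    IsSymbExponent G t b := by
  classical
  intro A hA
  have hle := hb A hA
  have htight := hv A hA
  simp only [Finsupp.add_apply, sum_add_distrib, map_add, degree_single, single_apply,
    Finset.sum_ite_eq] at hle htight
  split_ifs at hle htight <;> lia

theorem exists_mem_of_tight [Finite V] (hd : IsSymbExponent G t d) (hdeg : t + t < d.degree) :
    ∃ v, d v ≠ 0 ∧ ∀ A : Finset V, G.IsIndepSet (A : Set V) →
      t + ∑ u ∈ A, d u = d.degree → v ∈ A := by
  classical
  cases nonempty_fintype V
  obtain ⟨α, hα⟩ := Nat.exists_eq_add_of_le hd.le_degree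
  let tight : Finset (Finset V) := {A | G.IsIndepSet (A : Set V) ∧ t + ∑ u ∈ A, d u = d.degree}
  have mem_tight {A : Finset V} :
      A ∈ tight ↔ G.IsIndepSet (A : Set V) ∧ t + ∑ u ∈ A, d u = d.degree := by simp [tight]
  rcases tight.eq_empty_or_nonempty with hempty | hne
  · obtain ⟨v, hv⟩ : ∃ v, d v ≠ 0 := DFunLike.ne_iff.1 fun h : d = 0 ↦ by simp [h] at hdeg
    refine ⟨v, hv, fun A hA hAt ↦ ?_⟩
    exact absurd (mem_tight.2 ⟨hA, hAt⟩) (hempty ▸ notMem_empty A)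
  · have hajnal : 2 • α ≤ ∑ v ∈ tight.sup id, d v + ∑ v ∈ tight.inf' hne id, d v :=
      two_nsmul_le_sum_sup_add_sum_inf' (fun A hA ↦ by have := hd A hA; lia) hne
        (fun A hA ↦ (mem_tight.1 hA).1) (fun A hA ↦ by have := (mem_tight.1 hA).2; lia)
    have hsup : ∑ v ∈ tight.sup id, d v ≤ d.degree := sum_le_degree d _
    have hinf : ∑ v ∈ tight.inf' hne id, d v ≠ 0 := by lia
    obtain ⟨v, hv, hdv⟩ := exists_ne_zero_of_sum_ne_zero hinf
    exact ⟨v, hdv, fun A hA hAt ↦ (Finset.mem_inf' hne).1 hv A (mem_tight.2 ⟨hA, hAt⟩)⟩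

theorem exists_le_degree_eq [Finite V] (hd : IsSymbExponent G t d) (hdeg : t + t ≤ d.degree) :
    ∃ b ≤ d, IsSymbExponent G t b ∧ b.degree = t + t := by
  obtain ⟨b, hbd, hmin⟩ := exists_minimal_le_of_wellFoundedLT
    (fun b ↦ IsSymbExponent G t b ∧ t + t ≤ b.degree) d ⟨hd, hdeg⟩
  refine ⟨b, hbd, hmin.prop.1, ?_⟩
  by_contra hne
  have hlt : t + t < b.degree := lt_of_le_of_ne hmin.prop.2 (Ne.symm hne)
  obtain ⟨v, hv, htight⟩ := hmin.prop.1.exists_mem_of_tight hlt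
  obtain ⟨c, rfl⟩ := le_iff_exists_add'.1 (single_le_iff.2 (Nat.one_le_iff_ne_zero.2 hv))
  rw [map_add, degree_single] at hlt
  have hle := hmin.le_of_le ⟨hmin.prop.1.of_add_single htight, by lia⟩ le_self_add
  simpa using hle v

theorem card_le {y : Fin (t + t) → V} (hy : IsSymbExponent G t (∑ i, single (y i) 1))
    (S : Finset (Fin (t + t))) (hS : G.IsIndepSet (y '' S)) : #S ≤ t := by
  classical
  have hcard : #S ≤ ∑ v ∈ S.image y, (∑ i, single (y i) 1 : V →₀ ℕ) v := by
    rw [card_eq_sum_card_image y S]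
    gcongr with v
    simp only [finsetSum_apply, single_apply, ← card_filter]
    gcongr
    exact subset_univ S
  have hle := hy (S.image y) (by rwa [coe_image])
  simp only [map_sum, degree_single, sum_const, card_univ, Fintype.card_fin] at hle
  lia

end IsSymbExponent

end SymbExponent

theorem exists_monotone_eq_sum_single {V : Type*} [LinearOrder V] {N : ℕ} {b : V →₀ ℕ}
    (hb : b.degree = N) :
    ∃ y : Fin N → V, Monotone y ∧ b = ∑ i, single (y i) 1 := by
  let l := (toMultiset b).sort (· ≤ ·)
  have hlength : l.length = N := by
    rw [Multiset.length_sort, card_toMultiset, ← hb]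
    rfl
  subst hlength
  refine ⟨l.get, ((toMultiset b).pairwise_sort (· ≤ ·)).sortedLE.monotone_get, ?_⟩
  apply Multiset.toFinsupp.symm.injective
  calc toMultiset b = ((l : Multiset V).map ({·})).sum := by
        rw [Multiset.sum_map_singleton, Multiset.sort_eq]
    _ = ∑ i : Fin l.length, {l.get i} := (Fin.sum_univ_fun_getElem l ({·})).symm
    _ = toMultiset (∑ i, single (l.get i) 1) := by simp only [map_sum, toMultiset_single, one_nsmul]

section CocircularInterval

variable {V : Type*} [LinearOrder V] {G : SimpleGraph V}

/-- `G` is the complement of a circular interval graph: of the two arcs bounded by non-adjacent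
vertices `u` and `v`, at least one is independent. The cyclic order of the vertices is the one
obtained by closing up the linear order, so that `Set.Iic u ∪ Set.Ici v` is an arc. -/
def IsCocircularInterval (G : SimpleGraph V) : Prop :=
  ∀ ⦃u v : V⦄, u ≤ v → ¬G.Adj u v →
    G.IsIndepSet (Set.Icc u v) ∨ G.IsIndepSet (Set.Iic u ∪ Set.Ici v)

theorem IsCocircularInterval.adj_castAdd_natAdd (hG : IsCocircularInterval G) {t : ℕ}
    {y : Fin (t + t) → V} (hy : Monotone y)
    (hcard : ∀ S : Finset (Fin (t + t)), G.IsIndepSet (y '' S) → #S ≤ t) (j : Fin t) :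
    G.Adj (y (j.castAdd t)) (y (j.natAdd t)) := by
  have hlt : j.castAdd t < j.natAdd t := Fin.lt_def.2 (j.is_lt.trans_le (Nat.le_add_right t j))
  by_contra hadj
  rcases hG (hy hlt.le) hadj with hinner | houter
  · have hle := hcard (Icc (j.castAdd t) (j.natAdd t))
      (hinner.mono (by simpa using hy.image_Icc_subset))
    simp only [Fin.card_Icc, Fin.val_natAdd, Fin.val_castAdd] at hle
    lia
  · have hle := hcard (Iic (j.castAdd t) ∪ Ici (j.natAdd t)) (houter.mono (by
      rw [coe_union, coe_Iic, coe_Ici, Set.image_union]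
      exact Set.union_subset_union hy.image_Iic_subset hy.image_Ici_subset))
    have hdisj : Disjoint (Iic (j.castAdd t)) (Ici (j.natAdd t)) :=
      disjoint_left.2 fun i hi hi' ↦ hlt.not_ge ((mem_Ici.1 hi').trans (mem_Iic.1 hi))
    rw [card_union_of_disjoint hdisj] at hle
    simp only [Fin.card_Iic, Fin.card_Ici, Fin.val_natAdd, Fin.val_castAdd] at hle
    lia

end CocircularInterval

section EdgeIdeal

variable {k : Type*} [Field k] {V : Type*} {G : SimpleGraph V} {t : ℕ} {d : V →₀ ℕ}

theorem le_sum_of_mem_coverPrime_pow {C : Finset V} {p : MvPolynomial V k}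
    (hp : p ∈ coverPrime k C ^ t) (hd : d ∈ p.support) : t ≤ ∑ v ∈ C, d v := by
  classical
  induction t generalizing p d with
  | zero => exact Nat.zero_le _
  | succ t ih =>
    rw [pow_succ] at hp
    refine Submodule.mul_induction_on (C := fun p ↦ ∀ d ∈ p.support, t + 1 ≤ ∑ v ∈ C, d v) hp
      (fun a ha c hc d hd ↦ ?_) (fun a c iha ihc d hd ↦ ?_) d hd
    · obtain ⟨d₁, hd₁, d₂, hd₂, rfl⟩ := Finset.mem_add.1 (support_mul a c hd)
      obtain ⟨v, hv, hdv⟩ := mem_ideal_span_X_image.1 hc d₂ hd₂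
      have hle : d₂ v ≤ ∑ u ∈ C, d₂ u := single_le_sum_of_canonicallyOrdered hv
      have := ih ha hd₁
      simp only [Finsupp.add_apply, sum_add_distrib]
      lia
    · rcases Finset.mem_union.1 (MvPolynomial.support_add hd) with h | h
      exacts [iha d h, ihc d h]

theorem IsVertexCover.exists_isMinVertexCover_subset {C : Finset V} (hC : IsVertexCover G C) :
    ∃ D ⊆ C, IsMinVertexCover G D := by
  obtain ⟨D, hDC, hD⟩ := exists_minimal_le_of_wellFoundedLT (IsVertexCover G) C hC
  exact ⟨D, hDC, hD.prop, fun E hE hcover ↦ hE.antisymm (hD.le_of_le hcover hE)⟩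

theorem isSymbExponent_of_mem_symbPow [Finite V] {p : MvPolynomial V k} (hp : p ∈ symbPow k G t)
    (hd : d ∈ p.support) : IsSymbExponent G t d := by
  classical
  cases nonempty_fintype V
  intro A hA
  have hcover : IsVertexCover G Aᶜ := fun a b hab ↦ by
    simpa using SimpleGraph.isVertexCover_compl.2 hA hab
  obtain ⟨D, hDA, hD⟩ := hcover.exists_isMinVertexCover_subset
  have hpD : p ∈ coverPrime k D ^ t := by
    simp only [symbPow, Ideal.mem_iInf] at hp
    exact hp D hD
  calc t + ∑ v ∈ A, d v ≤ ∑ v ∈ Aᶜ, d v + ∑ v ∈ A, d v := by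
        gcongr
        exact (le_sum_of_mem_coverPrime_pow hpD hd).trans (sum_le_sum_of_subset hDA)
    _ = d.degree := by rw [sum_compl_add_sum, degree_eq_sum]

theorem monomial_sum_single_mem_edgeIdeal_pow {y : Fin (t + t) → V}
    (hy : ∀ j : Fin t, G.Adj (y (j.castAdd t)) (y (j.natAdd t))) :
    monomial (∑ i, single (y i) 1) (1 : k) ∈ edgeIdeal k G ^ t := by
  have hprod : monomial (∑ i, single (y i) 1) (1 : k) =
      ∏ j : Fin t, X (y (j.castAdd t)) * X (y (j.natAdd t)) := by
    rw [monomial_sum_one, Fin.prod_univ_add, prod_mul_distrib]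
    rfl
  rw [hprod, ← Fin.prod_const t (edgeIdeal k G)]
  exact Ideal.prod_mem_prod fun j _ ↦ Ideal.subset_span ⟨_, _, hy j, rfl⟩

theorem IsCocircularInterval.monomial_mem_edgeIdeal_pow [LinearOrder V] [Finite V]
    (hG : IsCocircularInterval G) (hd : IsSymbExponent G t d) (hdeg : t + t ≤ d.degree) (c : k) :
    monomial d c ∈ edgeIdeal k G ^ t := by
  obtain ⟨b, hbd, hb, hbdeg⟩ := hd.exists_le_degree_eq hdeg
  obtain ⟨y, hy, rfl⟩ := exists_monotone_eq_sum_single hbdeg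
  obtain ⟨e, rfl⟩ := le_iff_exists_add'.1 hbd
  rw [← mul_one c, ← monomial_mul]
  exact Ideal.mul_mem_left _ _
    (monomial_sum_single_mem_edgeIdeal_pow (hG.adj_castAdd_natAdd hy hb.card_le))

theorem stmt10_general [LinearOrder V] [Finite V] (hG : IsCocircularInterval G) (t : ℕ) :
    Ideal.span (Set.range (X : V → MvPolynomial V k)) ^ t * symbPow k G t ≤
      edgeIdeal k G ^ t := by
  rw [Ideal.mul_le]
  intro q hq p hp
  rw [(q * p).as_sum]
  refine Ideal.sum_mem _ fun d hd ↦ ?_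
  obtain ⟨d₁, hd₁, d₂, hd₂, rfl⟩ := Finset.mem_add.1 (support_mul q p hd)
  have hd₁t : t ≤ d₁.degree := (mem_pow_idealOfVars_iff t q).1 hq d₁ hd₁
  have hd₂t : IsSymbExponent G t d₂ := isSymbExponent_of_mem_symbPow hp hd₂
  refine hG.monomial_mem_edgeIdeal_pow (hd₂t.mono le_add_self) ?_ _
  rw [map_add]
  exact add_le_add hd₁t hd₂t.le_degree

end EdgeIdeal

/-- The order of the representatives `0, …, n - 1`, which turns the indexing of the vertices of
`G_{n,r}` into a linear order. -/
abbrev valLinearOrder (n : ℕ) [NeZero n] : LinearOrder (ZMod n) :=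
  LinearOrder.lift' ZMod.val (ZMod.val_injective n)

theorem isCocircularInterval_Gnr (n r : ℕ) [NeZero n] :
    letI := valLinearOrder n
    IsCocircularInterval (Gnr n r) := by
  let := valLinearOrder n
  have le_iff (a b : ZMod n) : a ≤ b ↔ a.val ≤ b.val := Iff.rfl
  intro u v huv hadj
  rw [le_iff] at huv
  have hlt := v.val_lt
  have hfar : v.val - u.val < r + 1 ∨ n - (r + 1) < v.val - u.val := by
    by_contra! hnear
    exact hadj ⟨by rintro rfl; lia, Or.inl hnear⟩
  refine hfar.imp (fun hshort a ha b hb _ hab ↦ ?_) (fun hlong a ha b hb _ hab ↦ ?_)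
  · simp only [Set.mem_Icc, le_iff] at ha hb
    simp only [Gnr, SimpleGraph.fromRel_adj] at hab
    lia
  · simp only [Set.mem_union, Set.mem_Iic, Set.mem_Ici, le_iff] at ha hb
    simp only [Gnr, SimpleGraph.fromRel_adj] at hab
    have := a.val_lt
    have := b.val_lt
    lia

/-- For the edge ideal `I = I(G_{n,r})` and the homogeneous maximal ideal
`m = (x_1,…,x_n)`, one has `m^t · I^{(t)} ⊆ I^t` for all `t ≥ 1`. -/
theorem stmt10 {k : Type*} [Field k] (n r : ℕ) (hn : 2 ≤ n) (hr : r ≤ n / 2 - 1)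
    (t : ℕ) (ht : 1 ≤ t) :
    (Ideal.span (Set.range (X : ZMod n → MvPolynomial (ZMod n) k))) ^ t *
      symbPow k (Gnr n r) t ≤ (edgeIdeal k (Gnr n r)) ^ t := by
  have : NeZero n := ⟨by lia⟩
  let := valLinearOrder n
  exact stmt10_general (isCocircularInterval_Gnr n r) t
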